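/- arXiv:math/0311467 — 2 statements merged into one kernel-verified Lean document; each statement's English description precedes it below -/
import Mathlib

section
/- For all i, j ∈ {1,…,n−c} such that blk(c+i) > blk(j) (i.e., such that the (i,j) entry of M(t) is the variable x_{c+i,j}), the power t^d divides, in R[t], the minor of M(t) obtained by deleting row i and column j. -/
open Finset MvPolynomial

noncomputable section

/-- Sum of the first `j` block sizes (blocks are 1-indexed). -/
def blkSum (c : ℕ → ℕ) (j : ℕ) : ℕ := ∑ i ∈ Finset.Icc 1 j, c i

/-- Block index of `a ∈ {1,…,n}`: the least `j` with `a ≤ c 1 + ⋯ + c j`. -/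
def blk (c : ℕ → ℕ) (a : ℕ) : ℕ := sInf {j | a ≤ blkSum c j}

/-- The index set `P` of positions of the nilradical `m`: pairs `(a, b)` of indices
(0-indexed here, representing the 1-indexed pair `(a+1, b+1)`) with `b < a` and
`blk (b+1) < blk (a+1)`. -/
abbrev Pos (c : ℕ → ℕ) (n : ℕ) : Type :=
  {p : Fin n × Fin n // p.2 < p.1 ∧ blk c (p.2.1 + 1) < blk c (p.1.1 + 1)}

/-- The generic matrix `𝒳` of the nilradical `m`. -/
def genX (c : ℕ → ℕ) (n : ℕ) : Matrix (Fin n) (Fin n) (MvPolynomial (Pos c n) ℂ) :=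
  Matrix.of fun a b =>
    if h : b < a ∧ blk c (b.1 + 1) < blk c (a.1 + 1) then X (⟨(a, b), h⟩ : Pos c n) else 0

/-- The matrix `M(t)`: the `(n-c) × (n-c)` submatrix of `𝒳 + t · Id` consisting of
rows `c+1, …, n` and columns `1, …, n-c`, viewed over `R[t]`.  Here `m = n - c`. -/
def Mmat (c : ℕ → ℕ) (n m : ℕ) (h : m + c 1 = n) :
    Matrix (Fin m) (Fin m) (Polynomial (MvPolynomial (Pos c n) ℂ)) :=
  Matrix.of fun i j =>
    Polynomial.C (genX c n (Fin.cast h (i.addNat (c 1)))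
        (Fin.castLE (le_trans (Nat.le_add_right m (c 1)) (le_of_eq h)) j))
      + if (Fin.cast h (i.addNat (c 1)) : Fin n)
            = Fin.castLE (le_trans (Nat.le_add_right m (c 1)) (le_of_eq h)) j
        then Polynomial.X else 0

/-- `d := Σᵢ max (cᵢ - c, 0)` (truncated subtraction). -/
def dBS (c : ℕ → ℕ) (l : ℕ) : ℕ := ∑ i ∈ Finset.Icc 1 l, (c i - c 1)

/-- The Benlolo–Sanderson element: the coefficient of `t^d` in `det M(t)`. -/
def BSf (c : ℕ → ℕ) (l n m : ℕ) (h : m + c 1 = n) : MvPolynomial (Pos c n) ℂ :=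
  ((Mmat c n m h).det).coeff (dBS c l)

/-- The point of the nilradical determined by `ξ : P → ℂ`. -/
def Xpt (c : ℕ → ℕ) (n : ℕ) (ξ : Pos c n → ℂ) : Matrix (Fin n) (Fin n) ℂ :=
  Matrix.of fun a b =>
    if h : b < a ∧ blk c (b.1 + 1) < blk c (a.1 + 1) then ξ ⟨(a, b), h⟩ else 0

lemma card_fin_Ico (m lo hi : ℕ) :
    (Finset.univ.filter (fun i : Fin m => lo ≤ i.1 ∧ i.1 < hi)).card = min hi m - lo := by
  rw [← Finset.card_map Fin.valEmbedding, ← Nat.card_Ico]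
  congr 1
  ext x
  simp only [Finset.mem_map, Finset.mem_filter, Finset.mem_univ, true_and, Finset.mem_Ico,
    Fin.valEmbedding_apply]
  constructor
  · rintro ⟨a, ha, rfl⟩
    have := a.2
    omega
  · intro h
    exact ⟨⟨x, by omega⟩, by simp; omega, rfl⟩

lemma blkSum_mono (c : ℕ → ℕ) {a b : ℕ} (h : a ≤ b) : blkSum c a ≤ blkSum c b :=
  Finset.sum_le_sum_of_subset (Finset.Icc_subset_Icc_right h)

lemma blk_le_iff (c : ℕ → ℕ) (l a q : ℕ) (ha : a ≤ blkSum c l) :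
    blk c a ≤ q ↔ a ≤ blkSum c q := by
  constructor
  · intro h
    have h1 : blk c a ∈ {j | a ≤ blkSum c j} := Nat.sInf_mem ⟨l, ha⟩
    exact le_trans h1 (blkSum_mono c h)
  · intro h
    exact Nat.sInf_le h

lemma blkSum_succ (c : ℕ → ℕ) (q : ℕ) : blkSum c (q + 1) = blkSum c q + c (q + 1) := by
  unfold blkSum
  rw [Finset.sum_Icc_succ_top (by omega)]

lemma comb_bound (l : ℕ) (c : ℕ → ℕ) (n m : ℕ) (hn : n = blkSum c l) (hm : m + c 1 = n)
    (τ : Equiv.Perm (Fin m))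
    (h : ∀ i, (τ i).1 = c 1 + i.1 ∨ blk c ((τ i).1 + 1) < blk c (c 1 + i.1 + 1)) :
    dBS c l ≤ (Finset.univ.filter (fun i : Fin m => (τ i).1 = c 1 + i.1)).card := by
  have key : ∀ q ∈ Finset.Icc 1 l, c q - c 1 ≤
      (Finset.univ.filter (fun i : Fin m => (τ i).1 = c 1 + i.1 ∧
        blk c (c 1 + i.1 + 1) = q)).card := by
    intro q hq
    rw [Finset.mem_Icc] at hq
    obtain ⟨hq1, hql⟩ := hq
    rcases Nat.eq_or_lt_of_le hq1 with rfl | hq2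
    · simp
    obtain ⟨p, rfl⟩ : ∃ p, q = p + 1 := ⟨q - 1, by omega⟩
    have hB1 : c 1 ≤ blkSum c p := by
      have : blkSum c 1 = c 1 := by simp [blkSum]
      rw [← this]; exact blkSum_mono c (by omega)
    have hB2 := blkSum_succ c p
    have hB3 : blkSum c (p + 1) ≤ n := hn ▸ blkSum_mono c hql
    set B := blkSum c p with hB
    have hblk : ∀ i : Fin m, blk c (c 1 + i.1 + 1) = p + 1 ↔
        B - c 1 ≤ i.1 ∧ i.1 < B + c (p + 1) - c 1 := by
      intro i
      have := i.2
      have e1 := blk_le_iff c l (c 1 + i.1 + 1) p (by omega)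
      have e2 := blk_le_iff c l (c 1 + i.1 + 1) (p + 1) (by omega)
      rw [← hB] at e1
      omega
    have hA : (Finset.univ.filter (fun i : Fin m => blk c (c 1 + i.1 + 1) = p + 1)).card
        = c (p + 1) := by
      simp_rw [hblk]
      rw [card_fin_Ico]; omega
    have hS : (Finset.univ.filter (fun i : Fin m => B - c 1 ≤ i.1 ∧ i.1 < m)).card
        = m + c 1 - B := by
      rw [card_fin_Ico]; omega
    have hU : (Finset.univ.filter (fun i : Fin m => B ≤ (τ i).1 ∧ (τ i).1 < m)).card
        = m - B := by
      rw [← Finset.card_map τ.toEmbedding]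
      have := card_fin_Ico m B m
      rw [min_self] at this
      rw [← this]
      congr 1
      ext x
      simp only [Finset.mem_map_equiv, Finset.mem_filter, Finset.mem_univ, true_and,
        Equiv.apply_symm_apply]
    have hsplit := Finset.card_filter_add_card_filter_not
      (s := Finset.univ.filter (fun i : Fin m => blk c (c 1 + i.1 + 1) = p + 1))
      (fun i : Fin m => (τ i).1 = c 1 + i.1)
    rw [Finset.filter_filter, Finset.filter_filter, hA] at hsplit
    have hdisj : Disjoint
        (Finset.univ.filter (fun i : Fin m => blk c (c 1 + i.1 + 1) = p + 1 ∧
          ¬ (τ i).1 = c 1 + i.1))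
        (Finset.univ.filter (fun i : Fin m => B ≤ (τ i).1 ∧ (τ i).1 < m)) := by
      rw [Finset.disjoint_filter]
      rintro i - ⟨h1, h2⟩ ⟨h3, h4⟩
      have h5 := (h i).resolve_left h2
      have e1 := blk_le_iff c l ((τ i).1 + 1) p (by omega)
      rw [← hB] at e1
      omega
    have hsub : (Finset.univ.filter (fun i : Fin m => blk c (c 1 + i.1 + 1) = p + 1 ∧
          ¬ (τ i).1 = c 1 + i.1)) ∪
        (Finset.univ.filter (fun i : Fin m => B ≤ (τ i).1 ∧ (τ i).1 < m)) ⊆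
        (Finset.univ.filter (fun i : Fin m => B - c 1 ≤ i.1 ∧ i.1 < m)) := by
      intro i hi
      simp only [Finset.mem_union, Finset.mem_filter, Finset.mem_univ, true_and] at hi ⊢
      rcases hi with ⟨h1, -⟩ | ⟨h1, h2⟩
      · exact ⟨((hblk i).1 h1).1, i.2⟩
      · refine ⟨?_, i.2⟩
        rcases h i with h3 | h3
        · omega
        · have := i.2
          have e1 := blk_le_iff c l ((τ i).1 + 1) p (by omega)
          have e2 := blk_le_iff c l (c 1 + i.1 + 1) p (by omega)
          rw [← hB] at e1 e2
          omega
    have hcard := Finset.card_le_card hsub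
    rw [Finset.card_union_of_disjoint hdisj, hU, hS] at hcard
    have hcomm : (Finset.univ.filter (fun i : Fin m => (τ i).1 = c 1 + i.1 ∧
        blk c (c 1 + i.1 + 1) = p + 1)) = (Finset.univ.filter (fun i : Fin m =>
        blk c (c 1 + i.1 + 1) = p + 1 ∧ (τ i).1 = c 1 + i.1)) := by
      simp_rw [and_comm]
    rw [hcomm]
    omega
  unfold dBS
  refine le_trans (Finset.sum_le_sum key) ?_
  rw [← Finset.card_biUnion]
  · apply Finset.card_le_card
    intro i hi
    simp only [Finset.mem_biUnion, Finset.mem_filter, Finset.mem_univ, true_and] at hi ⊢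
    obtain ⟨q, -, hq, -⟩ := hi
    exact hq
  · intro a _ b _ hab
    rw [Function.onFun, Finset.disjoint_filter]
    rintro i - ⟨-, h1⟩ ⟨-, h2⟩
    exact hab (h1.symm.trans h2)

lemma genX_eq_zero (c : ℕ → ℕ) (n : ℕ) (a b : Fin n)
    (h : ¬ blk c (b.1 + 1) < blk c (a.1 + 1)) : genX c n a b = 0 := by
  simp only [genX, Matrix.of_apply]
  rw [dif_neg (fun h' => h h'.2)]

lemma minor_eq {S : Type*} [CommRing S] {k : ℕ} (M : Matrix (Fin (k + 1)) (Fin (k + 1)) S)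
    (i j : Fin (k + 1)) : (M.submatrix i.succAbove j.succAbove).det =
      (-1) ^ (i.1 + j.1) * (M.updateRow i (Pi.single j 1)).det := by
  rw [← Matrix.adjugate_apply, Matrix.adjugate_fin_succ_eq_det_submatrix, ← mul_assoc,
    ← mul_pow, neg_mul_neg, one_mul, one_pow, one_mul]

/-- Lemma 3.9: if the `(i,j)` entry of `M(t)` is one of the variables `x_{c+i,j}` of `m⁻`
(that is, `blk (c+i) > blk j`), then the cofactor minor `M^{i,j}`, obtained from `M(t)` by
deleting row `i` and column `j`, is divisible by `t^d` in `R[t]`. -/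
theorem t_pow_d_dvd_cofactor
    (l : ℕ) (hl : 2 ≤ l) (c : ℕ → ℕ) (hc : ∀ i ∈ Finset.Icc 1 l, 0 < c i)
    (hcl : c l = c 1) (n : ℕ) (hn : n = blkSum c l)
    (m k : ℕ) (hm : m + c 1 = n) (hk : k + 1 = m)
    (i j : Fin m) (hij : blk c (j.1 + 1) < blk c (c 1 + i.1 + 1)) :
    (Polynomial.X : Polynomial (MvPolynomial (Pos c n) ℂ)) ^ (dBS c l) ∣
      ((Mmat c n m hm).submatrix
        (fun a : Fin k => Fin.cast hk ((Fin.cast hk.symm i).succAbove a))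
        (fun a : Fin k => Fin.cast hk ((Fin.cast hk.symm j).succAbove a))).det := by
  subst hk
  set M := Mmat c n (k + 1) hm with hM
  have hadj : (M.submatrix
        (fun a : Fin k => Fin.cast rfl ((Fin.cast rfl i).succAbove a))
        (fun a : Fin k => Fin.cast rfl ((Fin.cast rfl j).succAbove a))).det =
      (-1) ^ (i.1 + j.1) * (M.updateRow i (Pi.single j 1)).det := by
    exact minor_eq M i j
  refine hadj ▸ Dvd.dvd.mul_left ?_ _
  rw [Matrix.det_apply]
  refine Finset.dvd_sum fun σ _ => ?_
  refine (dvd_smul_of_dvd _ ?_)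
  by_cases hz : ∃ b, M.updateRow i (Pi.single j 1) (σ b) b = 0
  · obtain ⟨b, hb⟩ := hz
    have h0 := Finset.prod_eq_zero (f := fun b => M.updateRow i (Pi.single j 1) (σ b) b)
      (Finset.mem_univ b) hb
    exact h0 ▸ dvd_zero _
  push Not at hz
  have hi : ∀ b, σ b = i → b = j := by
    intro b hb
    by_contra hne
    apply hz b
    rw [hb, Matrix.updateRow_self, Pi.single_eq_of_ne hne]
  have hent : ∀ b, b.1 = c 1 + (σ b).1 ∨ blk c (b.1 + 1) < blk c (c 1 + (σ b).1 + 1) := by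
    intro b
    by_cases hb : σ b = i
    · right
      rw [hb, hi b hb]
      exact hij
    · by_contra hcon
      push Not at hcon
      apply hz b
      rw [Matrix.updateRow_ne hb, hM]
      simp only [Mmat, Matrix.of_apply]
      rw [genX_eq_zero, if_neg]
      · simp
      · intro h
        have := congrArg Fin.val h
        simp at this
        omega
      · simp only [Fin.val_cast, Fin.val_addNat, Fin.val_castLE]
        rw [Nat.add_comm (σ b).1 (c 1)]
        omega
  have hcomb := comb_bound l c n (k + 1) hn hm σ.symm (by
    intro r
    have := hent (σ.symm r)
    rwa [Equiv.apply_symm_apply] at this)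
  set F := Finset.univ.filter (fun b : Fin (k + 1) => b.1 = c 1 + (σ b).1) with hF
  have hcard : (Finset.univ.filter (fun r : Fin (k + 1) => (σ.symm r).1 = c 1 + r.1)).card
      = F.card := by
    rw [← Finset.card_map σ.symm.toEmbedding]
    congr 1
    ext x
    simp [hF, Finset.mem_map_equiv]
  rw [hcard] at hcomb
  refine (pow_dvd_pow _ hcomb).trans ?_
  have hprod : ∏ b ∈ F, M.updateRow i (Pi.single j 1) (σ b) b = Polynomial.X ^ F.card := by
    rw [← Finset.prod_const]
    refine Finset.prod_congr rfl fun b hb => ?_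
    rw [hF, Finset.mem_filter] at hb
    have hb2 := hb.2
    have hne : σ b ≠ i := by
      intro hb3
      have hbj := hi b hb3
      rw [hb3, hbj] at hb2
      rw [← hb2] at hij
      exact lt_irrefl _ hij
    rw [Matrix.updateRow_ne hne, hM]
    simp only [Mmat, Matrix.of_apply]
    rw [genX_eq_zero, if_pos]
    · simp
    · ext
      simp
      omega
    · simp only [Fin.val_cast, Fin.val_addNat, Fin.val_castLE]
      rw [Nat.add_comm (σ b).1 (c 1), ← hb2]
      exact lt_irrefl _
  rw [← hprod]
  exact Finset.prod_dvd_prod_of_subset _ _ _ (Finset.subset_univ _)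


end
end

section
/- The set of pairs (i,j) with 1 ≤ i < j ≤ n such that blk(i) ≠ blk(j), v_i − v_j ≥ 1, and v^{(i,j)}_a ≠ v^{(i,j)}_b for all a < b with blk(a) = blk(b), consists of exactly one pair, namely (i,j) = (1,n); moreover v_1 − v_n = c. (This says that the set S°_μ of Proposition 4.2 equals {(c, β)}, β the highest root.) -/
open Finset

noncomputable section

theorem aux_S_succ (c : ℕ → ℕ) (p : ℕ) : blkSum c (p + 1) = blkSum c p + c (p + 1) := by
  unfold blkSum
  rw [Finset.sum_Icc_succ_top (by omega)]

theorem aux_S_zero (c : ℕ → ℕ) : blkSum c 0 = 0 := by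
  simp [blkSum]

theorem aux_S_mono (c : ℕ → ℕ) : Monotone (blkSum c) :=
  monotone_nat_of_le_succ (fun p => by rw [aux_S_succ]; omega)

theorem aux_blk_eq (c : ℕ → ℕ) (p a : ℕ) (h1 : blkSum c p < a) (h2 : a ≤ blkSum c (p + 1)) :
    blk c a = p + 1 := by
  unfold blk
  apply le_antisymm
  · exact Nat.sInf_le h2
  · apply le_csInf ⟨p + 1, h2⟩
    intro j hj
    by_contra hlt
    have := aux_S_mono c (show j ≤ p by omega)
    simp only [Set.mem_setOf_eq] at hj
    omega

theorem aux_exists (c : ℕ → ℕ) (l a : ℕ) (h1 : 1 ≤ a) (h2 : a ≤ blkSum c l) :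
    ∃ p, p < l ∧ blkSum c p < a ∧ a ≤ blkSum c (p + 1) := by
  induction l with
  | zero => rw [aux_S_zero] at h2; omega
  | succ k ih =>
    by_cases h : a ≤ blkSum c k
    · obtain ⟨p, hp, h⟩ := ih h
      exact ⟨p, by omega, h⟩
    · exact ⟨k, by omega, by omega, h2⟩

/-- Proposition 4.2: `S°_μ = {(c, β)}`.  With `v` encoding `μ + ρ` (so that
`(μ+ρ, ε_i - ε_j) = v i - v j`), the pairs `(i,j)`, `i < j`, with `ε_i - ε_j ∉ R_I`,
`(μ+ρ, ε_i-ε_j) ≥ 1`, and `s_{ε_i-ε_j}(μ+ρ)` regular for `I` (the swapped `v` injective on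
each block) form exactly the singleton `{(1,n)}`; moreover `v 1 - v n = c`. -/
theorem S_mu_regular_eq_singleton
    (l : ℕ) (hl : 2 ≤ l) (c : ℕ → ℕ) (hc : ∀ i ∈ Finset.Icc 1 l, 0 < c i)
    (hcl : c l = c 1) (hcne : ∀ j, 1 < j → j < l → c j ≠ c 1)
    (n : ℕ) (hn : n = blkSum c l)
    (b : ℕ → ℤ) (hb2 : b 2 = (max (c 1) (c 2) : ℕ) - 1)
    (hbj : ∀ j, 2 ≤ j → j ≤ l - 1 →
      b (j + 1) = (c j : ℤ) + (max (c 1) (c (j + 1)) : ℕ) - (max (c 1) (c j) : ℕ))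
    (v : ℕ → ℤ) (hvn : v n = 0)
    (hvsame : ∀ i, 1 ≤ i → i < n → blk c i = blk c (i + 1) → v i = v (i + 1) + 1)
    (hvjump : ∀ j, 1 ≤ j → j < l →
      v (blkSum c j) = v (blkSum c j + 1) - (b (j + 1) - 1)) :
    (∀ i j, 1 ≤ i → i < j → j ≤ n →
      ((blk c i ≠ blk c j ∧ 1 ≤ v i - v j ∧
          ∀ a a', 1 ≤ a → a < a' → a' ≤ n → blk c a = blk c a' →
            (v ∘ Equiv.swap i j) a ≠ (v ∘ Equiv.swap i j) a')
        ↔ (i = 1 ∧ j = n))) ∧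
    v 1 - v n = c 1 := by
  subst hn
  -- descent in a block
  have hdesc : ∀ p, p < l → ∀ k, k < c (p + 1) →
      v (blkSum c (p + 1) - k) = v (blkSum c (p + 1)) + k := by
    intro p hp k
    have hS := aux_S_succ c p
    have hle := aux_S_mono c (show p + 1 ≤ l by omega)
    induction k with
    | zero => intro _; simp
    | succ k ih =>
      intro hk
      have e : blkSum c (p + 1) - (k + 1) + 1 = blkSum c (p + 1) - k := by omega
      have := hvsame (blkSum c (p + 1) - (k + 1)) (by omega) (by omega) (by
        rw [e, aux_blk_eq c p _ (by omega) (by omega), aux_blk_eq c p _ (by omega) (by omega)])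
      rw [this, e, ih (by omega)]
      push_cast; ring
  have hstep : ∀ p, 1 ≤ p → p < l →
      v (blkSum c (p + 1)) = v (blkSum c p) + b (p + 1) - c (p + 1) := by
    intro p hp1 hp
    have hS := aux_S_succ c p
    have hpos := hc (p + 1) (by simp; omega)
    have h1 := hdesc p hp (c (p + 1) - 1) (by omega)
    have h2 := hvjump p hp1 hp
    have e : blkSum c (p + 1) - (c (p + 1) - 1) = blkSum c p + 1 := by omega
    rw [e] at h1
    push_cast [Nat.cast_sub (show 1 ≤ c (p + 1) from hpos)] at h1
    linarith
  have hw : ∀ p, p + 2 ≤ l → v (blkSum c (p + 2)) =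
      v (blkSum c 1) + (max (c 1) (c (p + 2)) : ℕ) - c (p + 2) - 1 := by
    intro p
    induction p with
    | zero =>
      intro h
      have := hstep 1 (by omega) (by omega)
      simp only [Nat.reduceAdd, zero_add] at this ⊢
      rw [this, hb2]; ring
    | succ p ih =>
      intro h
      have h1 := hstep (p + 2) (by omega) (by omega)
      have h2 := hbj (p + 2) (by omega) (by omega)
      have h3 := ih (by omega)
      rw [show p + 1 + 2 = p + 2 + 1 by ring, h1, h2, h3]; ring
  have hw1 : v (blkSum c 1) = 1 := by
    obtain ⟨q, rfl⟩ : ∃ q, l = q + 2 := ⟨l - 2, by omega⟩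
    have := hw q le_rfl
    rw [hvn, hcl, max_self] at this
    linarith
  have hval : ∀ p, p < l → ∀ a, blkSum c p < a → a ≤ blkSum c (p + 1) →
      v a = v (blkSum c (p + 1)) + blkSum c (p + 1) - a := by
    intro p hp a h1 h2
    have hS := aux_S_succ c p
    have := hdesc p hp (blkSum c (p + 1) - a) (by omega)
    rw [show blkSum c (p + 1) - (blkSum c (p + 1) - a) = a by omega, Nat.cast_sub h2] at this
    linarith
  have hm : ∀ p, p < l → (p = 0 ∧ v (blkSum c (p + 1)) = 1) ∨
      (0 < p ∧ c (p + 1) < c 1 ∧ v (blkSum c (p + 1)) = (c 1 : ℤ) - c (p + 1)) ∨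
      (0 < p ∧ p + 1 < l ∧ c 1 < c (p + 1) ∧ v (blkSum c (p + 1)) = 0) ∨
      (0 < p ∧ p + 1 = l ∧ c (p + 1) = c 1 ∧ v (blkSum c (p + 1)) = 0) := by
    intro p hp
    rcases p with _ | p
    · left; exact ⟨rfl, hw1⟩
    · right
      have h := hw p (by omega)
      rw [hw1] at h
      rw [show p + 1 + 1 = p + 2 by ring]
      rcases lt_trichotomy (c (p + 2)) (c 1) with h1 | h1 | h1
      · left
        rw [max_eq_left h1.le] at h
        exact ⟨by omega, h1, by linarith⟩
      · right; right
        have : ¬ (p + 2 < l) := fun h2 => hcne (p + 2) (by omega) h2 h1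
        rw [h1, max_self] at h
        exact ⟨by omega, by omega, h1, by linarith⟩
      · right; left
        rw [max_eq_right h1.le] at h
        refine ⟨by omega, ?_, h1, by linarith⟩
        by_contra h2
        have : p + 2 = l := by omega
        rw [this] at h1; omega
  have hS0 := aux_S_zero c
  have hS1 := aux_S_succ c 0
  simp only [zero_add] at hS1
  have hc1 := hc 1 (by simp; omega)
  have hv1 : v 1 = c 1 := by
    have := hval 0 (by omega) 1 (by omega) (by simp only [zero_add]; omega)
    simp only [zero_add] at this
    rw [this, hw1, hS1, hS0]; push_cast; ring
  obtain ⟨q, rfl⟩ : ∃ q, l = q + 1 := ⟨l - 1, by omega⟩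
  have hSl := aux_S_succ c q
  have hSl1 := aux_S_mono c (show 1 ≤ q by omega)
  have hblk1 : blk c 1 = 1 := aux_blk_eq c 0 1 (by omega) (by simp only [zero_add]; omega)
  have hblkn : blk c (blkSum c (q + 1)) = q + 1 := aux_blk_eq c q _ (by omega) le_rfl
  refine ⟨?_, by rw [hvn, hv1]; ring⟩
  intro i j hi hij hj
  constructor
  · rintro ⟨hne, hgt, hreg⟩
    have hreg' : ∀ a a', 1 ≤ a → 1 ≤ a' → a ≠ a' → a ≤ blkSum c (q + 1) →
        a' ≤ blkSum c (q + 1) → blk c a = blk c a' →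
        v (Equiv.swap i j a) ≠ v (Equiv.swap i j a') := by
      intro a a' h1 h2 h3 h4 h5 h6
      rcases lt_or_gt_of_ne h3 with h | h
      · exact hreg a a' h1 h h5 h6
      · exact (hreg a' a h2 h h4 h6.symm).symm
    obtain ⟨p, hp, hp1, hp2⟩ := aux_exists c (q + 1) i hi (by omega)
    obtain ⟨r, hr, hr1, hr2⟩ := aux_exists c (q + 1) j (by omega) hj
    have hbi := aux_blk_eq c p i hp1 hp2
    have hbj' := aux_blk_eq c r j hr1 hr2
    have hvi := hval p hp i hp1 hp2
    have hvj := hval r hr j hr1 hr2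
    have hSp := aux_S_succ c p
    have hSr := aux_S_succ c r
    have hpr : p < r := by
      rcases lt_trichotomy p r with h | h | h
      · exact h
      · subst h; omega
      · have := aux_S_mono c (show r + 1 ≤ p by omega); omega
    have hpl := aux_S_mono c (show p + 1 ≤ q + 1 by omega)
    have hrl := aux_S_mono c (show r + 1 ≤ q + 1 by omega)
    -- v j outside the block of i
    have key1 : ¬ (v (blkSum c (p + 1)) ≤ v j ∧ v j < v (blkSum c (p + 1)) + c (p + 1)) := by
      rintro ⟨h1, h2⟩
      obtain ⟨k, hk⟩ := Int.eq_ofNat_of_zero_le (sub_nonneg.2 h1)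
      have hd := hdesc p hp k (by omega)
      set a := blkSum c (p + 1) - k with ha
      have hab := aux_blk_eq c p a (by omega) (by omega)
      have hai : a ≠ i := by rintro h; rw [h] at hd; omega
      have haj : a ≠ j := by rintro h; rw [h] at hab; omega
      have := hreg' i a hi (by omega) hai.symm (by omega) (by omega) (by omega)
      rw [Equiv.swap_apply_left, Equiv.swap_apply_of_ne_of_ne hai haj] at this
      omega
    have key2 : ¬ (v (blkSum c (r + 1)) ≤ v i ∧ v i < v (blkSum c (r + 1)) + c (r + 1)) := by
      rintro ⟨h1, h2⟩
      obtain ⟨k, hk⟩ := Int.eq_ofNat_of_zero_le (sub_nonneg.2 h1)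
      have hd := hdesc r hr k (by omega)
      set a := blkSum c (r + 1) - k with ha
      have hab := aux_blk_eq c r a (by omega) (by omega)
      have hai : a ≠ i := by rintro h; rw [h] at hab; omega
      have haj : a ≠ j := by rintro h; rw [h] at hd; omega
      have := hreg' j a (by omega) (by omega) haj.symm (by omega) (by omega) (by omega)
      rw [Equiv.swap_apply_right, Equiv.swap_apply_of_ne_of_ne hai haj] at this
      omega
    have hmp := hm p hp
    have hmr := hm r hr
    rcases hmp with ⟨rfl, h⟩ | hmp
    · simp only [zero_add] at *
      rcases hmr with hmr | hmr | hmr | ⟨_, hmr, hmr2, hmr3⟩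
      · omega
      · omega
      · omega
      · obtain rfl : r = q := by omega
        omega
    · exfalso
      rcases hmp with hmp | hmp | hmp <;> rcases hmr with hmr | hmr | hmr | hmr <;> omega
  · rintro ⟨rfl, rfl⟩
    refine ⟨by omega, by omega, ?_⟩
    intro a a' h1 h2 h3 h4
    simp only [Function.comp_apply]
    obtain ⟨p, hp, hp1, hp2⟩ := aux_exists c (q + 1) a h1 (by omega)
    obtain ⟨r, hr, hr1, hr2⟩ := aux_exists c (q + 1) a' (by omega) h3
    rw [aux_blk_eq c p a hp1 hp2, aux_blk_eq c r a' hr1 hr2] at h4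
    obtain rfl : p = r := by omega
    have hva := hval p hp a hp1 hp2
    have hva' := hval p hp a' hr1 hr2
    have hSp := aux_S_succ c p
    have han : a ≠ blkSum c (q + 1) := by omega
    have ha'1 : a' ≠ 1 := by omega
    by_cases e1 : a = 1
    · obtain rfl : p = 0 := by
        by_contra hne
        have := aux_S_mono c (show 1 ≤ p by omega)
        omega
      simp only [zero_add] at *
      have e2 : a' ≠ blkSum c (q + 1) := by
        have := hc (q + 1) (by simp)
        omega
      rw [e1, Equiv.swap_apply_left, Equiv.swap_apply_of_ne_of_ne ha'1 e2]
      omega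
    · rw [Equiv.swap_apply_of_ne_of_ne e1 han]
      by_cases e2 : a' = blkSum c (q + 1)
      · obtain rfl : p = q := by
          by_contra hne
          have := aux_S_mono c (show p + 1 ≤ q by omega)
          have := hc (q + 1) (by simp)
          omega
        rw [e2, Equiv.swap_apply_right]
        omega
      · rw [Equiv.swap_apply_of_ne_of_ne ha'1 e2]
        omega

end
end
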